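/- arXiv:2506.15481 — 3 statements merged into one kernel-verified Lean document; each statement's English description precedes it below -/
import Mathlib

section
/- There exists a constant C ≥ 0 (depending only on v, μ, σ, d and the point (t,x)) such that for every Δt ∈ (0,1], the mean of the antithetic single-step residual error satisfies |E[ε(Δt)]| ≤ C·Δt. -/
open MeasureTheory ProbabilityTheory Matrix

/-- Law of a random vector in `ℝ^d` whose coordinates are i.i.d. centered Gaussian
with variance `s` (i.e. `N(0, s·I_d)`). -/
noncomputable def gaussPi (d : ℕ) (s : ℝ) : Measure (Fin d → ℝ) :=
  Measure.pi fun _ => gaussianReal 0 s.toNNReal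

/-- Time partial derivative `∂_t v (t, x)`. -/
noncomputable def partialT {d : ℕ} (v : ℝ → (Fin d → ℝ) → ℝ) (t : ℝ) (x : Fin d → ℝ) : ℝ :=
  deriv (fun s => v s x) t

/-- Spatial gradient `∇_x v (t, x)`. -/
noncomputable def spatialGrad {d : ℕ} (v : ℝ → (Fin d → ℝ) → ℝ) (t : ℝ) (x : Fin d → ℝ) :
    Fin d → ℝ :=
  fun i => fderiv ℝ (v t) x (Pi.single i 1)

/-- Spatial Hessian `∇²_x v (t, x)` as a matrix. -/
noncomputable def spatialHess {d : ℕ} (v : ℝ → (Fin d → ℝ) → ℝ) (t : ℝ) (x : Fin d → ℝ) :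
    Matrix (Fin d) (Fin d) ℝ :=
  Matrix.of fun i j =>
    fderiv ℝ (fun y => fderiv ℝ (v t) y (Pi.single j 1)) x (Pi.single i 1)

/-- The antithetic single-step residual error `ε(Δt)` as a function of the Gaussian
increment `η`:
`ε = (v(t+Δt,x⁺) + v(t+Δt,x⁻) − 2v(t,x))/(2Δt) − (∂_t v + ½Tr[σσᵀ∇²v] + μ·∇v)` with
`x⁺ = x + μΔt + ση`, `x⁻ = x + μΔt − ση`. -/
noncomputable def resErr {d : ℕ} (v : ℝ → (Fin d → ℝ) → ℝ) (μv : Fin d → ℝ)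
    (σ : Matrix (Fin d) (Fin d) ℝ) (t : ℝ) (x : Fin d → ℝ) (Δt : ℝ) (η : Fin d → ℝ) : ℝ :=
  (v (t + Δt) (x + Δt • μv + σ.mulVec η) + v (t + Δt) (x + Δt • μv - σ.mulVec η) - 2 * v t x)
      / (2 * Δt)
    - (partialT v t x + (1 / 2) * (σ * σᵀ * spatialHess v t x).trace + μv ⬝ᵥ spatialGrad v t x)

instance isProbabilityMeasure_gaussPi (d : ℕ) (s : ℝ) : IsProbabilityMeasure (gaussPi d s) := by
  unfold gaussPi; infer_instance

lemma memLp_eval_gaussPi {d : ℕ} (s : ℝ) (i : Fin d) {p : ENNReal} (hp : p ≠ ⊤) :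
    MemLp (fun η : Fin d → ℝ => η i) p (gaussPi d s) :=
  (memLp_id_gaussianReal' p hp).comp_measurePreserving
    (measurePreserving_eval (fun _ : Fin d => gaussianReal 0 s.toNNReal) i)

lemma memLp_id_gaussPi (d : ℕ) (s : ℝ) {p : ENNReal} (hp : p ≠ ⊤) :
    MemLp (fun η : Fin d → ℝ => η) p (gaussPi d s) :=
  MemLp.of_eval fun i => memLp_eval_gaussPi s i hp

lemma integrable_norm_pow_gaussPi (d : ℕ) (s : ℝ) (k : ℕ) :
    Integrable (fun η : Fin d → ℝ => ‖η‖ ^ k) (gaussPi d s) :=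
  (memLp_id_gaussPi d s (ENNReal.natCast_ne_top k)).integrable_norm_pow'

/-- Second moments of `N(0, s·I_d)`. -/
lemma integral_eval_mul_eval_gaussPi {d : ℕ} {s : ℝ} (hs : 0 ≤ s) (i j : Fin d) :
    ∫ η, η i * η j ∂(gaussPi d s) = if i = j then s else 0 := by
  have eval (k : Fin d) :=
    measurePreserving_eval (fun _ : Fin d => gaussianReal 0 s.toNNReal) k
  have mean (k : Fin d) : ∫ η, η k ∂(gaussPi d s) = 0 := by
    have h := integral_map (μ := gaussPi d s) (φ := fun η : Fin d → ℝ => η k) (f := fun y : ℝ => y)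
      (measurable_pi_apply k).aemeasurable (by fun_prop)
    rw [← h, gaussPi, (eval k).map_eq, integral_id_gaussianReal]
  split_ifs with hij
  · subst hij
    have h := integral_map (μ := gaussPi d s) (φ := fun η : Fin d → ℝ => η i)
      (f := fun y : ℝ => y * y) (measurable_pi_apply i).aemeasurable (by fun_prop)
    have hvar := variance_fun_id_gaussianReal (μ := 0) (v := s.toNNReal)
    rw [variance_eq_integral (by fun_prop), integral_id_gaussianReal] at hvar
    rw [← h, gaussPi, (eval i).map_eq]
    simpa [sq, hs] using hvar
  · have hind : IndepFun (fun η : Fin d → ℝ => η i) (fun η => η j) (gaussPi d s) :=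
      (iIndepFun_pi (μ := fun _ : Fin d => gaussianReal 0 s.toNNReal)
        (X := fun _ y => y) (fun _ => by fun_prop)).indepFun hij
    rw [hind.integral_fun_mul_eq_mul_integral
      (measurable_pi_apply i).aestronglyMeasurable (measurable_pi_apply j).aestronglyMeasurable, mean, zero_mul]

/-- Rescaling a standard Gaussian vector. -/
lemma gaussPi_eq_map_smul (d : ℕ) {s : ℝ} (hs : 0 ≤ s) :
    gaussPi d s = (gaussPi d 1).map (fun η => √s • η) := by
  have h : (gaussianReal 0 (1 : ℝ).toNNReal).map (√s * ·) = gaussianReal 0 s.toNNReal := by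
    rw [gaussianReal_map_const_mul]
    congr 1
    · simp
    · ext; simp [hs]
  have : SigmaFinite ((gaussianReal 0 (1 : ℝ).toNNReal).map (√s * ·)) := by
    rw [h]; infer_instance
  have h' := Measure.pi_map_pi (μ := fun _ : Fin d => gaussianReal 0 (1 : ℝ).toNNReal)
    (f := fun _ y => √s * y) (fun _ => by fun_prop)
  simp only [h] at h'
  exact h'.symm

lemma integral_norm_pow_gaussPi (d : ℕ) {s : ℝ} (hs : 0 ≤ s) (k : ℕ) :
    ∫ η, ‖η‖ ^ k ∂(gaussPi d s) = √s ^ k * ∫ η, ‖η‖ ^ k ∂(gaussPi d 1) := by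
  rw [gaussPi_eq_map_smul d hs, integral_map (by fun_prop) (by fun_prop), ← integral_const_mul]
  simp [norm_smul, mul_pow, abs_of_nonneg (Real.sqrt_nonneg s)]

section Taylor

variable {E : Type*} [NormedAddCommGroup E] [NormedSpace ℝ E]

lemma iteratedDeriv_comp_line {n : ℕ} {f : E → ℝ} (hf : ContDiff ℝ n f) (q w : E) {k : ℕ}
    (hk : k ≤ n) (s : ℝ) :
    iteratedDeriv k (fun r : ℝ => f (q + r • w)) s
      = iteratedFDeriv ℝ k f (q + s • w) (fun _ => w) := by
  induction k generalizing s with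
  | zero => simp
  | succ k ih =>
    rw [iteratedDeriv_succ, funext (ih (by omega)), iteratedFDeriv_succ_apply_left]
    have hd : DifferentiableAt ℝ (iteratedFDeriv ℝ k f) (q + s • w) :=
      (hf.differentiable_iteratedFDeriv (by exact_mod_cast hk)).differentiableAt
    have hl : HasDerivAt (fun r : ℝ => q + r • w) w s := by
      simpa using ((hasDerivAt_id s).smul_const w).const_add q
    have h1 := hd.hasFDerivAt.comp_hasDerivAt s hl
    have h2 := (ContinuousMultilinearMap.apply ℝ (fun _ : Fin k => E) ℝ
      (fun _ => w)).hasFDerivAt.comp_hasDerivAt s h1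
    exact h2.deriv

/-- Taylor's theorem along the segment from `q` to `q + w`. -/
lemma abs_sub_taylor_le {n : ℕ} {f : E → ℝ} (hf : ContDiff ℝ (n + 1 : ℕ) f) {M : ℝ}
    (hM : ∀ p, ‖iteratedFDeriv ℝ (n + 1) f p‖ ≤ M) (q w : E) :
    |f (q + w) - ∑ k ∈ Finset.range (n + 1),
      (k.factorial : ℝ)⁻¹ * iteratedFDeriv ℝ k f q (fun _ => w)| ≤ M * ‖w‖ ^ (n + 1) := by
  have hφ : ContDiff ℝ (n + 1 : ℕ) (fun r : ℝ => f (q + r • w)) := by fun_prop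
  obtain ⟨y, -, hy⟩ := taylor_mean_remainder_lagrange_iteratedDeriv (n := n) zero_ne_one
    (hφ.contDiffOn (s := Set.uIcc (0 : ℝ) 1))
  have hpoly : taylorWithinEval (fun r : ℝ => f (q + r • w)) n (Set.uIcc 0 1) 0 1
      = ∑ k ∈ Finset.range (n + 1),
        (k.factorial : ℝ)⁻¹ * iteratedFDeriv ℝ k f q (fun _ => w) := by
    rw [taylor_within_apply]
    refine Finset.sum_congr rfl fun k hk => ?_
    have hk' : k ≤ n + 1 := (Finset.mem_range.1 hk).le
    rw [iteratedDerivWithin_eq_iteratedDeriv (uniqueDiffOn_uIcc zero_ne_one)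
      (hφ.of_le (by exact_mod_cast hk')).contDiffAt (by simp),
      iteratedDeriv_comp_line hf q w hk']
    simp
  rw [hpoly, iteratedDeriv_comp_line hf q w le_rfl] at hy
  simp only [one_smul, sub_zero, one_pow, mul_one] at hy
  rw [hy, abs_div, Nat.abs_cast]
  refine (div_le_self (abs_nonneg _) (by exact_mod_cast (n + 1).factorial_pos)).trans ?_
  refine ((iteratedFDeriv ℝ (n + 1) f (q + y • w)).le_opNorm _).trans ?_
  simpa using mul_le_mul_of_nonneg_right (hM (q + y • w)) (by positivity)

/-- Second-order symmetric difference: the odd Taylor terms cancel. -/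
lemma abs_symm_diff_sub_le {f : E → ℝ} (hf : ContDiff ℝ 4 f) {M : ℝ}
    (hM : ∀ p, ‖iteratedFDeriv ℝ 4 f p‖ ≤ M) (q w : E) :
    |f (q + w) + f (q - w) - 2 * f q - iteratedFDeriv ℝ 2 f q (fun _ => w)|
      ≤ 2 * M * ‖w‖ ^ 4 := by
  have h1 := abs_sub_taylor_le (n := 3) hf hM q w
  have h2 := abs_sub_taylor_le (n := 3) hf hM q (-w)
  have hneg (k : ℕ) : iteratedFDeriv ℝ k f q (fun _ => -w)
      = (-1) ^ k * iteratedFDeriv ℝ k f q (fun _ => w) := by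
    simpa using (iteratedFDeriv ℝ k f q).map_smul_univ (fun _ => (-1 : ℝ)) (fun _ => w)
  simp only [hneg, Finset.sum_range_succ, Finset.sum_range_zero, norm_neg, Nat.factorial,
    iteratedFDeriv_zero_apply, ← sub_eq_add_neg] at h1 h2
  norm_num at h1 h2
  rw [abs_le] at *
  constructor <;> linarith [h1.1, h1.2, h2.1, h2.2]

lemma abs_iteratedFDeriv_two_sub_le {f : E → ℝ} (hf : ContDiff ℝ 4 f) {M : ℝ}
    (hM : ∀ p, ‖iteratedFDeriv ℝ 3 f p‖ ≤ M) (p q w : E) :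
    |iteratedFDeriv ℝ 2 f q (fun _ => w) - iteratedFDeriv ℝ 2 f p (fun _ => w)|
      ≤ M * ‖q - p‖ * ‖w‖ ^ 2 := by
  have h := convex_univ.norm_image_sub_le_of_norm_fderiv_le (𝕜 := ℝ) (f := iteratedFDeriv ℝ 2 f)
    (C := M) (x := p) (y := q)
    (fun z _ => (hf.differentiable_iteratedFDeriv (by norm_num)).differentiableAt)
    (fun z _ => norm_fderiv_iteratedFDeriv.trans_le (hM z)) (Set.mem_univ _) (Set.mem_univ _)
  refine ((iteratedFDeriv ℝ 2 f q - iteratedFDeriv ℝ 2 f p).le_opNorm fun _ => w).trans ?_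
  simpa using mul_le_mul_of_nonneg_right h (sq_nonneg ‖w‖)

end Taylor

section Derivatives

variable {d : ℕ} {v : ℝ → (Fin d → ℝ) → ℝ}

lemma fderiv_spatial (hv : Differentiable ℝ (Function.uncurry v)) (t : ℝ) (y u : Fin d → ℝ) :
    fderiv ℝ (v t) y u = fderiv ℝ (Function.uncurry v) (t, y) (0, u) := by
  have h := (hv (t, y)).hasFDerivAt.comp y (hasFDerivAt_prodMk_right t y)
  have h' : HasFDerivAt (v t) _ y := h
  rw [h'.fderiv]
  simp

lemma partialT_add_dotProduct_spatialGrad (hv : Differentiable ℝ (Function.uncurry v))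
    (t : ℝ) (x μv : Fin d → ℝ) :
    partialT v t x + μv ⬝ᵥ spatialGrad v t x
      = fderiv ℝ (Function.uncurry v) (t, x) (1, μv) := by
  have ht : partialT v t x = fderiv ℝ (Function.uncurry v) (t, x) (1, 0) := by
    have hline : HasDerivAt (fun s : ℝ => (s, x)) (1, 0) t :=
      (hasDerivAt_id t).prodMk (hasDerivAt_const t x)
    exact ((hv (t, x)).hasFDerivAt.comp_hasDerivAt t hline).deriv
  have hx : μv ⬝ᵥ spatialGrad v t x = fderiv ℝ (v t) x μv := by
    conv_rhs => rw [pi_eq_sum_univ' μv]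
    simp [dotProduct, spatialGrad]
  rw [ht, hx, fderiv_spatial hv, ← map_add]
  simp

lemma spatialHess_apply (hv : ContDiff ℝ 2 (Function.uncurry v)) (t : ℝ) (x : Fin d → ℝ)
    (i j : Fin d) :
    spatialHess v t x i j = fderiv ℝ (fderiv ℝ (Function.uncurry v)) (t, x)
      (0, Pi.single i 1) (0, Pi.single j 1) := by
  have hd : Differentiable ℝ (Function.uncurry v) := hv.differentiable (by norm_num)
  have hd' : Differentiable ℝ (fderiv ℝ (Function.uncurry v)) :=
    (hv.fderiv_right (m := 1) (by norm_num)).differentiable (by norm_num)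
  have h := (hd' (t, x)).hasFDerivAt.comp x (hasFDerivAt_prodMk_right t x)
  have h' := h.clm_apply (hasFDerivAt_const ((0, Pi.single j 1) : ℝ × (Fin d → ℝ)) x)
  simp only [spatialHess, Matrix.of_apply, fderiv_spatial hd]
  erw [h'.fderiv]
  simp

lemma iteratedFDeriv_two_spatial (hv : ContDiff ℝ 2 (Function.uncurry v)) (t : ℝ)
    (x w : Fin d → ℝ) :
    iteratedFDeriv ℝ 2 (Function.uncurry v) (t, x) (fun _ => (0, w))
      = ∑ i, ∑ j, w i * w j * spatialHess v t x i j := by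
  have hw : ((0, w) : ℝ × (Fin d → ℝ)) = ∑ i, w i • (0, Pi.single i 1) := by
    have h := congrArg (LinearMap.inr ℝ ℝ (Fin d → ℝ)) (pi_eq_sum_univ' w)
    simpa only [map_sum, map_smul, LinearMap.inr_apply] using h
  rw [iteratedFDeriv_two_apply, hw]
  simp only [spatialHess_apply hv, map_sum, map_smul, _root_.sum_apply,
    _root_.smul_apply, smul_eq_mul, Finset.mul_sum]
  rw [Finset.sum_comm]
  exact Finset.sum_congr rfl fun i _ => Finset.sum_congr rfl fun j _ => by ring

end Derivatives

lemma integrable_mulVec_quadratic {d : ℕ} (σ H : Matrix (Fin d) (Fin d) ℝ) (s : ℝ) :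
    Integrable (fun η => ∑ i, ∑ j, (σ *ᵥ η) i * (σ *ᵥ η) j * H i j) (gaussPi d s) := by
  have hσ (i : Fin d) : MemLp (fun η => (σ *ᵥ η) i) 2 (gaussPi d s) :=
    memLp_finsetSum Finset.univ fun k _ =>
      (memLp_eval_gaussPi s k ENNReal.ofNat_ne_top).const_mul (σ i k)
  exact integrable_finsetSum _ fun i _ => integrable_finsetSum _ fun j _ =>
    ((hσ i).integrable_mul (hσ j)).mul_const _

/-- Expectation of a quadratic form of the linear image `σ η` of a Gaussian vector. -/
lemma integral_mulVec_quadratic {d : ℕ} (σ H : Matrix (Fin d) (Fin d) ℝ) {s : ℝ} (hs : 0 ≤ s) :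
    ∫ η, ∑ i, ∑ j, (σ *ᵥ η) i * (σ *ᵥ η) j * H i j ∂(gaussPi d s)
      = s * (σ * σᵀ * H).trace := by
  have hint (k l : Fin d) : Integrable (fun η : Fin d → ℝ => η k * η l) (gaussPi d s) :=
    (memLp_eval_gaussPi s k (p := 2) (by norm_num)).integrable_mul
      (memLp_eval_gaussPi s l (p := 2) (by norm_num))
  have hexp (η : Fin d → ℝ) : ∑ i, ∑ j, (σ *ᵥ η) i * (σ *ᵥ η) j * H i j
      = ∑ i, ∑ j, ∑ k, ∑ l, (σ i k * σ j l * H i j) * (η k * η l) := by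
    refine Finset.sum_congr rfl fun i _ => Finset.sum_congr rfl fun j _ => ?_
    rw [mulVec, mulVec, dotProduct, dotProduct, Finset.sum_mul_sum, Finset.sum_mul]
    refine Finset.sum_congr rfl fun k _ => ?_
    rw [Finset.sum_mul]
    exact Finset.sum_congr rfl fun l _ => by ring
  have hterm (i j k l : Fin d) := (hint k l).const_mul (σ i k * σ j l * H i j)
  simp_rw [hexp]
  rw [integral_finsetSum _ fun i _ => integrable_finsetSum _ fun j _ =>
    integrable_finsetSum _ fun k _ => integrable_finsetSum _ fun l _ => hterm i j k l]
  simp_rw [integral_finsetSum _ fun j _ =>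
    integrable_finsetSum _ fun k _ => integrable_finsetSum _ fun l _ => hterm _ j k l,
    integral_finsetSum _ fun k _ => integrable_finsetSum _ fun l _ => hterm _ _ k l,
    integral_finsetSum _ fun l _ => hterm _ _ _ l, integral_const_mul,
    integral_eval_mul_eval_gaussPi hs]
  simp only [mul_ite, mul_zero, Finset.sum_ite_eq, Finset.mem_univ, if_true, trace, diag_apply,
    mul_apply, transpose_apply, Finset.mul_sum, Finset.sum_mul]
  rw [Finset.sum_comm]
  exact Finset.sum_congr rfl fun j _ => Finset.sum_congr rfl fun i _ =>
    Finset.sum_congr rfl fun k _ => by ring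

/-- Pointwise expansion of the residual error around its leading fluctuation. -/
lemma abs_resErr_sub_le {d : ℕ} {v : ℝ → (Fin d → ℝ) → ℝ}
    (hv : ContDiff ℝ 4 (Function.uncurry v)) {M : ℝ}
    (hM : ∀ i ∈ ({2, 3, 4} : Finset ℕ), ∀ p, ‖iteratedFDeriv ℝ i (Function.uncurry v) p‖ ≤ M)
    (t : ℝ) (x μv : Fin d → ℝ) (σ : Matrix (Fin d) (Fin d) ℝ) {s : ℝ} (hs : 0 < s)
    (η : Fin d → ℝ) :
    |resErr v μv σ t x s η
      - ((2 * s)⁻¹ * ∑ i, ∑ j, (σ *ᵥ η) i * (σ *ᵥ η) j * spatialHess v t x i j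
        - 1 / 2 * (σ * σᵀ * spatialHess v t x).trace)|
      ≤ M * (s⁻¹ * ‖σ *ᵥ η‖ ^ 4 + ‖((1, μv) : ℝ × (Fin d → ℝ))‖ * ‖σ *ᵥ η‖ ^ 2
        + s * ‖((1, μv) : ℝ × (Fin d → ℝ))‖ ^ 2) := by
  set f := Function.uncurry v with hf
  set a : ℝ × (Fin d → ℝ) := (1, μv) with ha
  set w : ℝ × (Fin d → ℝ) := (0, σ *ᵥ η) with hw
  have hwn : ‖w‖ = ‖σ *ᵥ η‖ := by simp [hw, Prod.norm_def]
  have hplus : v (t + s) (x + s • μv + σ *ᵥ η) = f ((t, x) + s • a + w) := by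
    simp [hf, ha, hw]
  have hminus : v (t + s) (x + s • μv - σ *ᵥ η) = f ((t, x) + s • a - w) := by
    simp [hf, ha, hw]
  have hsymm := abs_symm_diff_sub_le hv (hM 4 (by simp)) ((t, x) + s • a) w
  have hlip := abs_iteratedFDeriv_two_sub_le hv (hM 3 (by simp)) (t, x) ((t, x) + s • a) w
  have hdrift := abs_sub_taylor_le (n := 1) (hv.of_le (by norm_num)) (hM 2 (by simp)) (t, x) (s • a)
  simp only [Finset.sum_range_succ, Finset.sum_range_zero, iteratedFDeriv_zero_apply,
    iteratedFDeriv_one_apply, map_smul, smul_eq_mul, norm_smul, Real.norm_eq_abs, abs_of_pos hs,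
    Nat.factorial, Nat.cast_one, inv_one, one_mul, zero_add, mul_one, add_sub_cancel_left]
    at hdrift hlip
  rw [← iteratedFDeriv_two_spatial (hv.of_le (by norm_num)), ← hwn, resErr, hplus, hminus,
    add_right_comm (partialT v t x), partialT_add_dotProduct_spatialGrad
      (hv.differentiable (by norm_num)), show v t x = f (t, x) from rfl]
  set A := f ((t, x) + s • a + w)
  set B := f ((t, x) + s • a - w)
  set Q := iteratedFDeriv ℝ 2 f (t, x) fun _ => w
  set Q' := iteratedFDeriv ℝ 2 f ((t, x) + s • a) fun _ => w
  have hkey : |A + B - 2 * f (t, x) - 2 * s * fderiv ℝ f (t, x) a - Q|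
      ≤ 2 * s * (M * (s⁻¹ * ‖w‖ ^ 4 + ‖a‖ * ‖w‖ ^ 2 + s * ‖a‖ ^ 2)) := by
    have hrhs : 2 * s * (M * (s⁻¹ * ‖w‖ ^ 4 + ‖a‖ * ‖w‖ ^ 2 + s * ‖a‖ ^ 2))
        = 2 * M * ‖w‖ ^ 4 + 2 * (M * (s * ‖a‖) * ‖w‖ ^ 2) + 2 * (M * (s * ‖a‖) ^ 2) := by
      field_simp
    norm_num at hdrift
    rw [hrhs]
    rw [abs_le] at *
    constructor <;> linarith [hsymm.1, hsymm.2, hlip.1, hlip.2, hdrift.1, hdrift.2]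
  rw [← mul_le_mul_iff_right₀ (show (0 : ℝ) < 2 * s by positivity)]
  refine le_of_eq_of_le ?_ hkey
  rw [← abs_of_pos (show (0 : ℝ) < 2 * s by positivity), ← abs_mul,
    abs_of_pos (show (0 : ℝ) < 2 * s by positivity)]
  congr 1
  field_simp
  ring

/-- There exists `C ≥ 0` such that for every `Δt ∈ (0,1]`, `|E[ε(Δt)]| ≤ C·Δt`. -/
theorem stmt0 {d : ℕ} (hd : 1 ≤ d) (t : ℝ) (x μv : Fin d → ℝ) (σ : Matrix (Fin d) (Fin d) ℝ)
    (v : ℝ → (Fin d → ℝ) → ℝ) (hv : ContDiff ℝ 4 (Function.uncurry v))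
    (hbd : ∀ i : ℕ, i ≤ 4 → ∃ B : ℝ, ∀ p : ℝ × (Fin d → ℝ),
      ‖iteratedFDeriv ℝ i (Function.uncurry v) p‖ ≤ B) :
    ∃ C : ℝ, 0 ≤ C ∧ ∀ Δt : ℝ, 0 < Δt → Δt ≤ 1 →
      |∫ η, resErr v μv σ t x Δt η ∂(gaussPi d Δt)| ≤ C * Δt := by
  choose! B hB using hbd
  set M := max (B 2) (max (B 3) (B 4)) with hMdef
  have hM : ∀ i ∈ ({2, 3, 4} : Finset ℕ), ∀ p,
      ‖iteratedFDeriv ℝ i (Function.uncurry v) p‖ ≤ M := by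
    intro i hi p
    simp only [Finset.mem_insert, Finset.mem_singleton] at hi
    rcases hi with rfl | rfl | rfl
    · exact (hB 2 (by norm_num) p).trans (by simp [hMdef])
    · exact (hB 3 (by norm_num) p).trans (by simp [hMdef])
    · exact (hB 4 (by norm_num) p).trans (by simp [hMdef])
  have hM0 : 0 ≤ M := (norm_nonneg _).trans (hM 2 (by simp) 0)
  set a : ℝ × (Fin d → ℝ) := (1, μv)
  set L := (Matrix.mulVecLin σ).toContinuousLinearMap
  have hσ (η : Fin d → ℝ) : ‖σ *ᵥ η‖ ≤ ‖L‖ * ‖η‖ := L.le_opNorm η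
  set m : ℕ → ℝ := fun k => ∫ η, ‖η‖ ^ k ∂(gaussPi d 1)
  have hm (k : ℕ) : 0 ≤ m k := integral_nonneg fun η => by positivity
  refine ⟨M * (‖L‖ ^ 4 * m 4 + ‖a‖ * ‖L‖ ^ 2 * m 2 + ‖a‖ ^ 2), ?_, fun s hs _ => ?_⟩
  · have := hm 4
    have := hm 2
    positivity
  set main : (Fin d → ℝ) → ℝ := fun η =>
    (2 * s)⁻¹ * ∑ i, ∑ j, (σ *ᵥ η) i * (σ *ᵥ η) j * spatialHess v t x i j
      - 1 / 2 * (σ * σᵀ * spatialHess v t x).trace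
  set bound : (Fin d → ℝ) → ℝ := fun η =>
    M * (s⁻¹ * (‖L‖ ^ 4 * ‖η‖ ^ 4) + ‖a‖ * (‖L‖ ^ 2 * ‖η‖ ^ 2) + s * ‖a‖ ^ 2)
  have hquad := (integrable_mulVec_quadratic σ (spatialHess v t x) s).const_mul (2 * s)⁻¹
  have hmain_int : Integrable main (gaussPi d s) := hquad.sub (integrable_const _)
  have hmain : ∫ η, main η ∂(gaussPi d s) = 0 := by
    rw [integral_sub hquad (integrable_const _), integral_const_mul,
      integral_mulVec_quadratic _ _ hs.le]
    simp
    field_simp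
    ring
  have hle (η : Fin d → ℝ) : ‖resErr v μv σ t x s η - main η‖ ≤ bound η := by
    refine (abs_resErr_sub_le hv hM t x μv σ hs η).trans ?_
    have h4 := pow_le_pow_left₀ (norm_nonneg _) (hσ η) 4
    have h2 := pow_le_pow_left₀ (norm_nonneg _) (hσ η) 2
    rw [mul_pow] at h4 h2
    simp only [bound]
    gcongr
  have hint4 := ((integrable_norm_pow_gaussPi d s 4).const_mul (‖L‖ ^ 4)).const_mul s⁻¹
  have hint2 := ((integrable_norm_pow_gaussPi d s 2).const_mul (‖L‖ ^ 2)).const_mul ‖a‖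
  have hbound_int : Integrable bound (gaussPi d s) :=
    ((hint4.add hint2).add (integrable_const _)).const_mul M
  have hbound : ∫ η, bound η ∂(gaussPi d s)
      = M * (‖L‖ ^ 4 * m 4 + ‖a‖ * ‖L‖ ^ 2 * m 2 + ‖a‖ ^ 2) * s := by
    have hs2 : √s ^ 2 = s := Real.sq_sqrt hs.le
    have hs4 : √s ^ 4 = s ^ 2 := by rw [← hs2, ← pow_mul, hs2]
    simp only [bound]
    rw [integral_const_mul, integral_add (by exact hint4.add hint2) (integrable_const _),
      integral_add hint4 hint2]
    simp only [integral_const_mul, integral_norm_pow_gaussPi d hs.le, hs2, hs4, integral_const,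
      probReal_univ, one_smul, m]
    field_simp
  have hcont : Continuous (resErr v μv σ t x s) := by
    have hvc : Continuous (Function.uncurry v) := hv.continuous
    have h1 : Continuous fun η => v (t + s) (x + s • μv + σ *ᵥ η) :=
      hvc.comp (by fun_prop : Continuous fun η => (t + s, x + s • μv + σ *ᵥ η))
    have h2 : Continuous fun η => v (t + s) (x + s • μv - σ *ᵥ η) :=
      hvc.comp (by fun_prop : Continuous fun η => (t + s, x + s • μv - σ *ᵥ η))
    exact (((h1.add h2).sub continuous_const).div_const _).sub continuous_const
  have hdiff_int : Integrable (fun η => resErr v μv σ t x s η - main η) (gaussPi d s) :=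
    hbound_int.mono' (hcont.aestronglyMeasurable.sub hmain_int.aestronglyMeasurable)
      (.of_forall hle)
  have hsplit : ∫ η, resErr v μv σ t x s η ∂(gaussPi d s)
      = ∫ η, (resErr v μv σ t x s η - main η) ∂(gaussPi d s) := by
    have h := integral_add hdiff_int hmain_int
    simpa [hmain] using h
  rw [hsplit, ← hbound, ← Real.norm_eq_abs]
  exact norm_integral_le_of_norm_le hbound_int (.of_forall hle)
end

section
/- Fix d ∈ ℕ with d ≥ 1 and T > 0, let g(x) = log((1+‖x‖²)/2), and let γ_d be the standard Gaussian measure on ℝ^d. Define u : [0,T] × ℝ^d → ℝ by u(t,x) = −log ∫_{ℝ^d} exp(−g(x + √(2(T−t))·z)) dγ_d(z) = −log ∫_{ℝ^d} 2/(1 + ‖x + √(2(T−t))·z‖²) dγ_d(z). Then u is well defined (the integrand is bounded and positive so the integral is finite and positive), u(T,x) = g(x), and u solves the Hamilton–Jacobi–Bellman equation ∂_t u + Δ_x u = ‖∇_x u‖² on [0,T) × ℝ^d. -/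
open MeasureTheory ProbabilityTheory Matrix

/-- Standard Gaussian probability measure on `ℝ^d` (i.i.d. standard normal coordinates). -/
noncomputable def stdGauss (d : ℕ) : MeasureTheory.Measure (Fin d → ℝ) :=
  MeasureTheory.Measure.pi fun _ => ProbabilityTheory.gaussianReal 0 1

/-- Terminal data `g(x) = log((1+‖x‖²)/2)`. -/
noncomputable def gHJB {d : ℕ} (x : Fin d → ℝ) : ℝ :=
  Real.log ((1 + ∑ i, x i ^ 2) / 2)

/-- Cole–Hopf representation `u(t,x) = −log ∫ exp(−g(x + √(2(T−t))·z)) dγ_d(z)`. -/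
noncomputable def uHJB (d : ℕ) (T : ℝ) (t : ℝ) (x : Fin d → ℝ) : ℝ :=
  -Real.log (∫ z, Real.exp (-(gHJB (x + Real.sqrt (2 * (T - t)) • z))) ∂(stdGauss d))

instance (d : ℕ) : IsProbabilityMeasure (stdGauss d) := by
  unfold stdGauss; infer_instance

lemma integrable_of_measurable_of_bounded {α : Type*} [MeasurableSpace α] {μ : Measure α}
    [IsFiniteMeasure μ] {h : α → ℝ} {B : ℝ} (hm : Measurable h) (hB : ∀ x, |h x| ≤ B) :
    Integrable h μ :=
  Integrable.of_bound hm.aestronglyMeasurable B (.of_forall hB)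

lemma abs_apply_single_le {d : ℕ} {L : (Fin d → ℝ) →L[ℝ] ℝ} {C : ℝ} (hL : ‖L‖ ≤ C)
    (i : Fin d) : |L (Pi.single i 1)| ≤ C := by
  have := L.le_of_opNorm_le hL (Pi.single i 1)
  rwa [Pi.norm_single, norm_one, mul_one] at this

lemma hasDerivAt_gaussianPDFReal_zero_one (x : ℝ) :
    HasDerivAt (gaussianPDFReal 0 1) (-x * gaussianPDFReal 0 1 x) x := by
  rw [gaussianPDFReal_def]
  have h : HasDerivAt (fun y : ℝ => -(y - 0) ^ 2 / (2 * ((1 : NNReal) : ℝ))) (-x) x := by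
    have h0 := (((hasDerivAt_id x).sub_const 0).pow 2).neg.div_const (2 * ((1 : NNReal) : ℝ))
    refine h0.congr_deriv ?_
    simp only [id, NNReal.coe_one]
    norm_num
    ring
  refine (h.exp.const_mul _).congr_deriv ?_
  ring

/-- One-dimensional Gaussian integration by parts. -/
lemma integral_id_mul_gaussianReal {φ φ' : ℝ → ℝ} {B C : ℝ}
    (hφ : ∀ x, HasDerivAt φ (φ' x) x) (hm : Measurable φ')
    (hB : ∀ x, |φ x| ≤ B) (hC : ∀ x, |φ' x| ≤ C) :
    ∫ x, x * φ x ∂(gaussianReal 0 1) = ∫ x, φ' x ∂(gaussianReal 0 1) := by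
  have hφm : Measurable φ :=
    (continuous_iff_continuousAt.2 fun x => (hφ x).continuousAt).measurable
  have hxp : Integrable (fun x : ℝ => -x * gaussianPDFReal 0 1 x) := by
    have h := (integrable_mul_exp_neg_mul_sq (b := 1 / 2) (by norm_num)).const_mul
      (-(√(2 * Real.pi * (1 : NNReal)))⁻¹)
    refine h.congr (.of_forall fun x => ?_)
    simp only [gaussianPDFReal]
    have : -(1 / 2) * x ^ 2 = -(x - 0) ^ 2 / (2 * ((1 : NNReal) : ℝ)) := by
      simp; ring
    rw [this]; ring
  have key := integral_mul_deriv_eq_deriv_mul_of_integrable (u := φ) (u' := φ')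
    (v := gaussianPDFReal 0 1) (v' := fun x => -x * gaussianPDFReal 0 1 x)
    (fun x _ => hφ x) (fun x _ => hasDerivAt_gaussianPDFReal_zero_one x)
    (hxp.bdd_mul hφm.aestronglyMeasurable (.of_forall hB))
    ((integrable_gaussianPDFReal 0 1).bdd_mul hm.aestronglyMeasurable (.of_forall hC))
    ((integrable_gaussianPDFReal 0 1).bdd_mul hφm.aestronglyMeasurable (.of_forall hB))
  rw [integral_gaussianReal_eq_integral_smul one_ne_zero,
    integral_gaussianReal_eq_integral_smul one_ne_zero]
  simp only [smul_eq_mul]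
  calc ∫ x, gaussianPDFReal 0 1 x * (x * φ x)
      = -∫ x, φ x * (-x * gaussianPDFReal 0 1 x) := by
        rw [← integral_neg]; exact integral_congr_ae (.of_forall fun x => by ring)
    _ = ∫ x, φ' x * gaussianPDFReal 0 1 x := by rw [key, neg_neg]
    _ = _ := integral_congr_ae (.of_forall fun x => by ring)

lemma integrable_eval_stdGauss {d : ℕ} (i : Fin d) :
    Integrable (fun z : Fin d → ℝ => z i) (stdGauss d) := by
  have h : Integrable (id : ℝ → ℝ) (gaussianReal 0 1) :=
    memLp_one_iff_integrable.1 (memLp_id_gaussianReal 1)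
  exact (measurePreserving_eval (fun _ : Fin d => gaussianReal 0 1)
    i).integrable_comp_of_integrable h

lemma integral_stdGauss_succ {n : ℕ} (i : Fin (n + 1)) {G : (Fin (n + 1) → ℝ) → ℝ}
    (hG : Integrable G (stdGauss (n + 1))) :
    ∫ z, G z ∂(stdGauss (n + 1))
      = ∫ y, ∫ a, G (i.insertNth a y) ∂(gaussianReal 0 1) ∂(stdGauss n) := by
  have hmp := (measurePreserving_piFinSuccAbove
    (fun _ : Fin (n + 1) => gaussianReal 0 1) i).symm
  have hint : Integrable (fun p : ℝ × (Fin n → ℝ) => G (i.insertNth p.1 p.2))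
      ((gaussianReal 0 1).prod (stdGauss n)) :=
    hmp.integrable_comp_of_integrable hG
  rw [← integral_prod_symm _ hint]
  exact (hmp.integral_comp' G).symm

/-- Gaussian integration by parts in one coordinate. -/
lemma integral_eval_mul_stdGauss {d : ℕ} (i : Fin d) {h : (Fin d → ℝ) → ℝ} {B C : ℝ}
    (hh : Differentiable ℝ h) (hB : ∀ x, |h x| ≤ B) (hC : ∀ x, ‖fderiv ℝ h x‖ ≤ C) :
    ∫ z, z i * h z ∂(stdGauss d) = ∫ z, fderiv ℝ h z (Pi.single i 1) ∂(stdGauss d) := by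
  obtain _ | n := d
  · exact i.elim0
  have hC' : ∀ z, |fderiv ℝ h z (Pi.single i 1)| ≤ C := fun z =>
    abs_apply_single_le (hC z) i
  have hm : Measurable fun z => fderiv ℝ h z (Pi.single i 1) := measurable_fderiv_apply_const ℝ h _
  rw [integral_stdGauss_succ i ((integrable_eval_stdGauss i).mul_bdd
      hh.continuous.aestronglyMeasurable (.of_forall hB)),
    integral_stdGauss_succ i (integrable_of_measurable_of_bounded hm hC')]
  refine integral_congr_ae (.of_forall fun y => ?_)
  have hins : ∀ a : ℝ, (i.insertNth a y : Fin (n + 1) → ℝ)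
      = Function.update (i.insertNth 0 y : Fin (n + 1) → ℝ) i a := fun a => by simp
  have hins_deriv : ∀ a : ℝ, HasDerivAt (fun a : ℝ => (i.insertNth a y : Fin (n + 1) → ℝ))
      (Pi.single i 1) a := fun a => by
    rw [funext hins]
    exact hasDerivAt_update _ i a
  have hcont : Continuous fun a : ℝ => (i.insertNth a y : Fin (n + 1) → ℝ) :=
    continuous_iff_continuousAt.2 fun a => (hins_deriv a).continuousAt
  simpa using integral_id_mul_gaussianReal
    (φ := fun a => h (i.insertNth a y))
    (φ' := fun a => fderiv ℝ h (i.insertNth a y) (Pi.single i 1))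
    (fun a => (hh _).hasFDerivAt.comp_hasDerivAt a (hins_deriv a))
    (hm.comp hcont.measurable) (fun _ => hB _) (fun _ => hC' _)

/-- Differentiation of a Gaussian average in space. -/
lemma hasFDerivAt_integral_stdGauss {d : ℕ} {h : (Fin d → ℝ) → ℝ} {B C : ℝ}
    (hh : Differentiable ℝ h) (hB : ∀ x, |h x| ≤ B) (hC : ∀ x, ‖fderiv ℝ h x‖ ≤ C)
    (r : ℝ) (x : Fin d → ℝ) :
    HasFDerivAt (fun y => ∫ z, h (y + r • z) ∂(stdGauss d))
      (∫ z, fderiv ℝ h (x + r • z) ∂(stdGauss d)) x := by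
  have hc : ∀ y : Fin d → ℝ, Continuous fun z : Fin d → ℝ => y + r • z := fun y => by fun_prop
  have hm : ∀ y, Measurable fun z => h (y + r • z) := fun y =>
    (hh.continuous.comp (hc y)).measurable
  refine hasFDerivAt_integral_of_dominated_of_fderiv_le (bound := fun _ => C)
    (F' := fun y z => fderiv ℝ h (y + r • z)) Filter.univ_mem
    (.of_forall fun y => (hm y).aestronglyMeasurable)
    (integrable_of_measurable_of_bounded (hm x) fun _ => hB _)
    ((measurable_fderiv ℝ h).comp (hc x).measurable).aestronglyMeasurable
    (.of_forall fun z y _ => hC _) (integrable_const C)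
    (.of_forall fun z y _ => ?_)
  exact (hasFDerivAt_comp_add_right (r • z)).2 (hh _).hasFDerivAt

lemma fderiv_integral_stdGauss_apply {d : ℕ} {h : (Fin d → ℝ) → ℝ} {B C : ℝ}
    (hh : Differentiable ℝ h) (hB : ∀ x, |h x| ≤ B) (hC : ∀ x, ‖fderiv ℝ h x‖ ≤ C)
    (r : ℝ) (x v : Fin d → ℝ) :
    fderiv ℝ (fun y => ∫ z, h (y + r • z) ∂(stdGauss d)) x v
      = ∫ z, fderiv ℝ h (x + r • z) v ∂(stdGauss d) := by
  rw [(hasFDerivAt_integral_stdGauss hh hB hC r x).fderiv]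
  refine ContinuousLinearMap.integral_apply ?_ v
  have hc : Continuous fun z : Fin d → ℝ => x + r • z := by fun_prop
  exact Integrable.of_bound
    ((measurable_fderiv ℝ h).comp hc.measurable).aestronglyMeasurable C (.of_forall fun _ => hC _)

/-- Differentiation of a Gaussian average in the scale parameter. -/
lemma hasDerivAt_integral_stdGauss_scale {d : ℕ} {h : (Fin d → ℝ) → ℝ} {B C : ℝ}
    (hh : Differentiable ℝ h) (hB : ∀ x, |h x| ≤ B) (hC : ∀ x, ‖fderiv ℝ h x‖ ≤ C)
    (r : ℝ) (x : Fin d → ℝ) :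
    HasDerivAt (fun s : ℝ => ∫ z, h (x + s • z) ∂(stdGauss d))
      (∑ i, ∫ z, z i * fderiv ℝ h (x + r • z) (Pi.single i 1) ∂(stdGauss d)) r := by
  have hc : ∀ s : ℝ, Continuous fun z : Fin d → ℝ => x + s • z := fun s => by fun_prop
  have hm : ∀ s : ℝ, Measurable fun z => h (x + s • z) := fun s =>
    (hh.continuous.comp (hc s)).measurable
  have hexp : ∀ (s : ℝ) (z : Fin d → ℝ), fderiv ℝ h (x + s • z) z
      = ∑ i, z i * fderiv ℝ h (x + s • z) (Pi.single i 1) := fun s z => by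
    conv_lhs => arg 2; rw [pi_eq_sum_univ' z]
    simp only [map_sum, map_smul, smul_eq_mul]
  have hpm : ∀ i, Measurable fun z => fderiv ℝ h (x + r • z) (Pi.single i 1) := fun i =>
    (measurable_fderiv_apply_const ℝ h _).comp (hc r).measurable
  have hpb : ∀ (s : ℝ) (i : Fin d) (z : Fin d → ℝ),
      |fderiv ℝ h (x + s • z) (Pi.single i 1)| ≤ C := fun _ i _ =>
    abs_apply_single_le (hC _) i
  have hpi : ∀ i, Integrable (fun z => z i * fderiv ℝ h (x + r • z) (Pi.single i 1))
      (stdGauss d) := fun i =>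
    (integrable_eval_stdGauss i).mul_bdd (hpm i).aestronglyMeasurable (.of_forall (hpb r i))
  rw [← integral_finsetSum _ fun i _ => hpi i]
  refine (hasDerivAt_integral_of_dominated_loc_of_deriv_le
    (bound := fun z => ∑ i, |z i| * C)
    (F' := fun s z => ∑ i, z i * fderiv ℝ h (x + s • z) (Pi.single i 1)) Filter.univ_mem
    (.of_forall fun s => (hm s).aestronglyMeasurable)
    (integrable_of_measurable_of_bounded (hm r) fun _ => hB _)
    (integrable_finsetSum _ fun i _ => hpi i).aestronglyMeasurable
    (.of_forall fun z s _ => ?_)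
    (integrable_finsetSum _ fun i _ => (integrable_eval_stdGauss i).abs.mul_const C)
    (.of_forall fun z s _ => ?_)).2
  · refine (norm_sum_le _ _).trans (Finset.sum_le_sum fun i _ => ?_)
    rw [norm_mul]
    exact mul_le_mul_of_nonneg_left (hpb s i z) (norm_nonneg _)
  · rw [← hexp]
    have hl : HasDerivAt (fun s : ℝ => x + s • z) z s := by
      simpa using ((hasDerivAt_id s).smul_const z).const_add x
    exact (hh _).hasFDerivAt.comp_hasDerivAt s hl

/-- Gaussian averages at scale `√(2(T−t))` solve the backward heat equation. -/
lemma hasDerivAt_integral_stdGauss_time {d : ℕ} {h : (Fin d → ℝ) → ℝ} {B C D : ℝ}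
    (hh : Differentiable ℝ h) (hB : ∀ x, |h x| ≤ B) (hC : ∀ x, ‖fderiv ℝ h x‖ ≤ C)
    (hp : ∀ i, Differentiable ℝ fun x => fderiv ℝ h x (Pi.single i 1))
    (hD : ∀ i x, ‖fderiv ℝ (fun x => fderiv ℝ h x (Pi.single i 1)) x‖ ≤ D)
    {t T : ℝ} (ht : t < T) (x : Fin d → ℝ) :
    HasDerivAt (fun s : ℝ => ∫ z, h (x + √(2 * (T - s)) • z) ∂(stdGauss d))
      (-∑ i, ∫ z, fderiv ℝ (fun y => fderiv ℝ h y (Pi.single i 1)) (x + √(2 * (T - t)) • z)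
        (Pi.single i 1) ∂(stdGauss d)) t := by
  have hpos : 0 < 2 * (T - t) := by linarith
  set r := √(2 * (T - t)) with hr
  have hr0 : 0 < r := Real.sqrt_pos.2 hpos
  have hsqrt : HasDerivAt (fun s : ℝ => √(2 * (T - s))) (-r⁻¹) t := by
    refine ((((hasDerivAt_id t).const_sub T).const_mul 2).sqrt hpos.ne').congr_deriv ?_
    simp only [id, ← hr]
    field_simp
  have hpb : ∀ i x, |fderiv ℝ h x (Pi.single i 1)| ≤ C := fun i _ =>
    abs_apply_single_le (hC _) i
  have hstein : ∀ i, ∫ z, z i * fderiv ℝ h (x + r • z) (Pi.single i 1) ∂(stdGauss d)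
      = r * ∫ z, fderiv ℝ (fun y => fderiv ℝ h y (Pi.single i 1)) (x + r • z)
        (Pi.single i 1) ∂(stdGauss d) := fun i => by
    have hfd : ∀ z, HasFDerivAt (fun z => fderiv ℝ h (x + r • z) (Pi.single i 1))
        (r • fderiv ℝ (fun y => fderiv ℝ h y (Pi.single i 1)) (x + r • z)) z := fun z => by
      have hl : HasFDerivAt (fun z : Fin d → ℝ => x + r • z)
          (r • ContinuousLinearMap.id ℝ (Fin d → ℝ)) z :=
        ((hasFDerivAt_id z).const_smul r).const_add x
      refine ((hp i (x + r • z)).hasFDerivAt.comp z hl).congr_fderiv ?_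
      ext v
      simp
    rw [integral_eval_mul_stdGauss i (B := C) (C := r * D)
      (fun z => (hfd z).differentiableAt) (fun _ => hpb i _) fun z => ?_, ← integral_const_mul]
    · simp only [(hfd _).fderiv, _root_.smul_apply, smul_eq_mul]
    · rw [(hfd z).fderiv, norm_smul, Real.norm_of_nonneg hr0.le]
      exact mul_le_mul_of_nonneg_left (hD _ _) hr0.le
  refine ((hasDerivAt_integral_stdGauss_scale hh hB hC r x).comp t hsqrt).congr_deriv ?_
  simp only [hstein, ← Finset.mul_sum]
  field_simp

/-- The function `exp (-g)` for the terminal data `g = gHJB`. -/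
noncomputable def expNegG {d : ℕ} (x : Fin d → ℝ) : ℝ := 2 / (1 + ∑ i, x i ^ 2)

lemma one_le_one_add_sum_sq {d : ℕ} (x : Fin d → ℝ) : 1 ≤ 1 + ∑ i, x i ^ 2 :=
  le_add_of_nonneg_right (Finset.sum_nonneg fun _ _ => sq_nonneg _)

lemma abs_le_one_add_sum_sq {d : ℕ} (x : Fin d → ℝ) (i : Fin d) : |x i| ≤ 1 + ∑ i, x i ^ 2 := by
  have h := Finset.single_le_sum (f := fun i => x i ^ 2) (fun _ _ => sq_nonneg _)
    (Finset.mem_univ i)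
  have h' : |x i| ^ 2 ≤ ∑ i, x i ^ 2 := by rw [sq_abs]; exact h
  nlinarith [sq_nonneg (|x i| - 1)]

lemma exp_neg_gHJB {d : ℕ} (x : Fin d → ℝ) : Real.exp (-gHJB x) = expNegG x := by
  have h := one_le_one_add_sum_sq x
  rw [gHJB, ← Real.log_inv, Real.exp_log (by positivity), inv_div, expNegG]

lemma expNegG_pos {d : ℕ} (x : Fin d → ℝ) : 0 < expNegG x :=
  div_pos two_pos (one_pos.trans_le (one_le_one_add_sum_sq x))

lemma abs_expNegG_le {d : ℕ} (x : Fin d → ℝ) : |expNegG x| ≤ 2 := by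
  rw [abs_of_pos (expNegG_pos x)]
  exact div_le_self two_pos.le (one_le_one_add_sum_sq x)

lemma hasFDerivAt_one_add_sum_sq {d : ℕ} (x : Fin d → ℝ) :
    HasFDerivAt (fun x : Fin d → ℝ => 1 + ∑ i, x i ^ 2)
      (∑ i, (2 * x i) • ContinuousLinearMap.proj (R := ℝ) (φ := fun _ : Fin d => ℝ) i) x := by
  refine (HasFDerivAt.fun_sum fun i _ => ?_).const_add 1
  simpa using (hasFDerivAt_apply (𝕜 := ℝ) i x).pow 2

lemma hasFDerivAt_expNegG {d : ℕ} (x : Fin d → ℝ) :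
    HasFDerivAt (expNegG (d := d)) (∑ i, (-4 * x i / (1 + ∑ k, x k ^ 2) ^ 2) •
      ContinuousLinearMap.proj (R := ℝ) (φ := fun _ : Fin d => ℝ) i) x := by
  have hN : (1 + ∑ k, x k ^ 2) ≠ 0 := (one_pos.trans_le (one_le_one_add_sum_sq x)).ne'
  have h := ((hasDerivAt_inv hN).comp_hasFDerivAt x (hasFDerivAt_one_add_sum_sq x)).const_mul 2
  refine h.congr_fderiv ?_
  rw [Finset.smul_sum, Finset.smul_sum]
  refine Finset.sum_congr rfl fun i _ => ?_
  rw [smul_smul, smul_smul]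
  congr 1
  field_simp
  ring

lemma fderiv_expNegG_single {d : ℕ} (i : Fin d) :
    (fun x => fderiv ℝ (expNegG (d := d)) x (Pi.single i 1))
      = fun x => -4 * x i / (1 + ∑ k, x k ^ 2) ^ 2 := by
  funext x
  rw [(hasFDerivAt_expNegG x).fderiv]
  simp [Pi.single_apply]

lemma hasFDerivAt_fderiv_expNegG_single {d : ℕ} (j : Fin d) (x : Fin d → ℝ) :
    HasFDerivAt (fun x => fderiv ℝ (expNegG (d := d)) x (Pi.single j 1))
      ((-4 / (1 + ∑ k, x k ^ 2) ^ 2) •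
          ContinuousLinearMap.proj (R := ℝ) (φ := fun _ : Fin d => ℝ) j
        + ∑ i, (16 * x i * x j / (1 + ∑ k, x k ^ 2) ^ 3) •
          ContinuousLinearMap.proj (R := ℝ) (φ := fun _ : Fin d => ℝ) i) x := by
  rw [fderiv_expNegG_single]
  have hN : (1 + ∑ k, x k ^ 2) ≠ 0 := (one_pos.trans_le (one_le_one_add_sum_sq x)).ne'
  have h := ((hasFDerivAt_apply (𝕜 := ℝ) j x).const_mul (-4)).mul
    ((hasDerivAt_inv (pow_ne_zero 2 hN)).comp_hasFDerivAt x ((hasFDerivAt_one_add_sum_sq x).pow 2))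
  refine h.congr_fderiv ?_
  rw [add_comm]
  congr 1
  · rw [smul_smul]
    congr 1
    simp only [Function.comp]
    field_simp
  · simp only [Finset.smul_sum]
    refine Finset.sum_congr rfl fun i _ => ?_
    simp only [smul_smul]
    congr 1
    simp only [nsmul_eq_mul]
    field_simp
    norm_num
    ring

lemma norm_proj_le_one {d : ℕ} (i : Fin d) :
    ‖ContinuousLinearMap.proj (R := ℝ) (φ := fun _ : Fin d => ℝ) i‖ ≤ 1 :=
  ContinuousLinearMap.opNorm_le_bound _ zero_le_one fun x => by
    simpa using norm_le_pi_norm x i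

lemma norm_smul_proj_le {d : ℕ} {a c : ℝ} (ha : |a| ≤ c) (i : Fin d) :
    ‖a • ContinuousLinearMap.proj (R := ℝ) (φ := fun _ : Fin d => ℝ) i‖ ≤ c := by
  rw [norm_smul]
  exact (mul_le_of_le_one_right (norm_nonneg _) (norm_proj_le_one i)).trans ha

lemma norm_fderiv_expNegG_le {d : ℕ} (x : Fin d → ℝ) :
    ‖fderiv ℝ (expNegG (d := d)) x‖ ≤ d * 4 := by
  rw [(hasFDerivAt_expNegG x).fderiv]
  refine (norm_sum_le_of_le _ fun i _ => norm_smul_proj_le (c := 4) ?_ i).trans (by simp)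
  have hN := one_le_one_add_sum_sq x
  have hx := abs_le_one_add_sum_sq x i
  rw [abs_div, abs_mul, abs_neg, abs_pow, abs_of_pos (zero_lt_one.trans_le hN),
    abs_of_pos (four_pos : (0 : ℝ) < 4), div_le_iff₀ (by positivity)]
  nlinarith

lemma norm_fderiv_fderiv_expNegG_single_le {d : ℕ} (j : Fin d) (x : Fin d → ℝ) :
    ‖fderiv ℝ (fun x => fderiv ℝ (expNegG (d := d)) x (Pi.single j 1)) x‖ ≤ 4 + d * 16 := by
  rw [(hasFDerivAt_fderiv_expNegG_single j x).fderiv]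
  have hN := one_le_one_add_sum_sq x
  have hxj := abs_le_one_add_sum_sq x j
  refine norm_add_le_of_le (norm_smul_proj_le ?_ j)
    ((norm_sum_le_of_le _ fun i _ => norm_smul_proj_le (c := 16) ?_ i).trans (by simp))
  · rw [abs_div, abs_neg, abs_pow, abs_of_pos (zero_lt_one.trans_le hN),
      abs_of_pos (four_pos : (0 : ℝ) < 4)]
    exact div_le_self four_pos.le (one_le_pow₀ hN)
  · have hxi := abs_le_one_add_sum_sq x i
    rw [abs_div, abs_mul, abs_mul, abs_pow, abs_of_pos (zero_lt_one.trans_le hN),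
      abs_of_pos (by norm_num : (0 : ℝ) < 16), div_le_iff₀ (by positivity), mul_assoc]
    refine mul_le_mul_of_nonneg_left ?_ (by norm_num)
    calc |x i| * |x j| ≤ (1 + ∑ k, x k ^ 2) * (1 + ∑ k, x k ^ 2) :=
          mul_le_mul hxi hxj (abs_nonneg _) (by positivity)
      _ = (1 + ∑ k, x k ^ 2) ^ 2 := (sq _).symm
      _ ≤ (1 + ∑ k, x k ^ 2) ^ 3 := pow_le_pow_right₀ hN (by norm_num)

/-- The second derivative of `-log F` in the direction `v`. -/
lemma fderiv_fderiv_neg_log_apply {E : Type*} [NormedAddCommGroup E] [NormedSpace ℝ E]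
    {F : E → ℝ} (hF : ∀ x, 0 < F x) (hd : Differentiable ℝ F) {v : E}
    (hdv : Differentiable ℝ fun x => fderiv ℝ F x v) (x : E) :
    fderiv ℝ (fun y => fderiv ℝ (fun w => -Real.log (F w)) y v) x v
      = -(fderiv ℝ (fun y => fderiv ℝ F y v) x v) / F x
        + (fderiv ℝ (fun w => -Real.log (F w)) x v) ^ 2 := by
  have h1 : ∀ y, fderiv ℝ (fun w => -Real.log (F w)) y v = -((F y)⁻¹ * fderiv ℝ F y v) :=
    fun y => by
      rw [((hd y).hasFDerivAt.log (hF y).ne').fun_neg.fderiv]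
      simp
  have h2 := (((hasDerivAt_inv (hF x).ne').comp_hasFDerivAt x (hd x).hasFDerivAt).mul
    (hdv x).hasFDerivAt).neg
  have h3 : fderiv ℝ (fun y => -((F y)⁻¹ * fderiv ℝ F y v)) x = _ := h2.fderiv
  rw [h1 x, funext h1, h3]
  have := (hF x).ne'
  simp
  field_simp
  ring

lemma measurable_expNegG_affine {d : ℕ} (r : ℝ) (x : Fin d → ℝ) :
    Measurable fun z : Fin d → ℝ => expNegG (x + r • z) := by
  unfold expNegG
  fun_prop

lemma integrable_expNegG_affine {d : ℕ} (r : ℝ) (x : Fin d → ℝ) :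
    Integrable (fun z => expNegG (x + r • z)) (stdGauss d) :=
  integrable_of_measurable_of_bounded (measurable_expNegG_affine r x) fun _ => abs_expNegG_le _

lemma integral_expNegG_affine_pos {d : ℕ} (r : ℝ) (x : Fin d → ℝ) :
    0 < ∫ z, expNegG (x + r • z) ∂(stdGauss d) := by
  rw [integral_pos_iff_support_of_nonneg (fun z => (expNegG_pos _).le)
    (integrable_expNegG_affine r x),
    Function.support_eq_univ fun z => (expNegG_pos (x + r • z)).ne']
  simp

/-- The Cole–Hopf representation is well defined (the integrand, which equals
`2/(1+‖x+√(2(T−t))z‖²)`, is bounded, positive, integrable, and has positive integral),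
satisfies the terminal condition `u(T,x) = g(x)`, and solves the HJB equation
`∂_t u + Δ_x u = ‖∇_x u‖²` on `[0,T) × ℝ^d`. -/
theorem stmt10 {d : ℕ} (hd : 1 ≤ d) (T : ℝ) (hT : 0 < T) :
    (∀ (t : ℝ) (x : Fin d → ℝ),
      MeasureTheory.Integrable
        (fun z => Real.exp (-(gHJB (x + Real.sqrt (2 * (T - t)) • z)))) (stdGauss d) ∧
      (∀ z : Fin d → ℝ,
        Real.exp (-(gHJB (x + Real.sqrt (2 * (T - t)) • z)))
          = 2 / (1 + ∑ i, ((x + Real.sqrt (2 * (T - t)) • z) i) ^ 2)) ∧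
      0 < ∫ z, Real.exp (-(gHJB (x + Real.sqrt (2 * (T - t)) • z))) ∂(stdGauss d)) ∧
    (∀ x : Fin d → ℝ, uHJB d T T x = gHJB x) ∧
    (∀ t ∈ Set.Ico 0 T, ∀ x : Fin d → ℝ,
      partialT (uHJB d T) t x + ∑ i, spatialHess (uHJB d T) t x i i
        = ∑ i, (spatialGrad (uHJB d T) t x i) ^ 2) := by
  have huF : ∀ t, uHJB d T t
      = fun x => -Real.log (∫ z, expNegG (x + √(2 * (T - t)) • z) ∂(stdGauss d)) := fun t => by
    funext x
    simp only [uHJB, exp_neg_gHJB]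
  refine ⟨fun t x => ?_, fun x => ?_, fun t ht x => ?_⟩
  · simp only [exp_neg_gHJB]
    exact ⟨integrable_expNegG_affine _ x, fun z => rfl, integral_expNegG_affine_pos _ x⟩
  · simp [uHJB]
  · have hh : Differentiable ℝ (expNegG (d := d)) := fun x =>
      (hasFDerivAt_expNegG x).differentiableAt
    have hp : ∀ i, Differentiable ℝ fun x => fderiv ℝ (expNegG (d := d)) x (Pi.single i 1) :=
      fun i x => (hasFDerivAt_fderiv_expNegG_single i x).differentiableAt
    have hpb : ∀ i x, |fderiv ℝ (expNegG (d := d)) x (Pi.single i 1)| ≤ d * 4 := fun i x =>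
      abs_apply_single_le (norm_fderiv_expNegG_le x) i
    have htime := (hasDerivAt_integral_stdGauss_time hh abs_expNegG_le norm_fderiv_expNegG_le hp
      norm_fderiv_fderiv_expNegG_single_le ht.2 x).log (integral_expNegG_affine_pos _ x).ne'
    have hgrad : ∀ i, (fun y => fderiv ℝ
        (fun y => ∫ z, expNegG (y + √(2 * (T - t)) • z) ∂(stdGauss d)) y (Pi.single i 1))
        = fun y => ∫ z, fderiv ℝ expNegG (y + √(2 * (T - t)) • z) (Pi.single i 1)
          ∂(stdGauss d) := fun i => funext fun y =>
      fderiv_integral_stdGauss_apply hh abs_expNegG_le norm_fderiv_expNegG_le _ y _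
    have hhess := fun i => fderiv_fderiv_neg_log_apply (v := Pi.single i 1)
      (fun y => integral_expNegG_affine_pos √(2 * (T - t)) y)
      (fun y => (hasFDerivAt_integral_stdGauss hh abs_expNegG_le norm_fderiv_expNegG_le _
        y).differentiableAt)
      (by
        rw [hgrad]
        exact fun y => (hasFDerivAt_integral_stdGauss (hp i) (hpb i)
          (norm_fderiv_fderiv_expNegG_single_le i) _ y).differentiableAt) x
    simp only [partialT, spatialHess, spatialGrad, Matrix.of_apply, huF, hhess, hgrad,
      htime.fun_neg.deriv, fderiv_integral_stdGauss_apply (hp _) (hpb _)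
        (norm_fderiv_fderiv_expNegG_single_le _)]
    rw [Finset.sum_add_distrib, ← Finset.sum_div, Finset.sum_neg_distrib]
    ring
end

section
/- Let D ∈ ℝ^{K×K} be symmetric positive definite with smallest eigenvalue λ_min > 0 and largest eigenvalue λ_max, let V ∈ ℝ^{K×K} be symmetric positive semidefinite, and let 0 < α < 1/(2λ_max). Consider the recursion F_{n+1} = (I − 2αD)·F_n·(I − 2αD) + 4α²·DVD on symmetric K×K matrices, started from an arbitrary symmetric F₀. Then F_n converges (as n → ∞) to F_∞ = 4α²·Σ_{k=0}^∞ (I − 2αD)^k · DVD · (I − 2αD)^k, which is the unique symmetric fixed point of the recursion, is independent of F₀, and satisfies the operator-norm bound ‖F_∞‖ ≤ 2α·λ_max²·‖V‖/λ_min; in particular F_∞ = O(α) as α → 0. -/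
open Matrix Filter

/-- The `ℓ²`-operator (spectral) norm of a real square matrix. -/
noncomputable def matOpNorm {K : ℕ} (M : Matrix (Fin K) (Fin K) ℝ) : ℝ :=
  ‖LinearMap.toContinuousLinearMap (Matrix.toEuclideanLin M)‖

/-- The matrix `S = I − 2αD`. -/
noncomputable def Smat {K : ℕ} (α : ℝ) (D : Matrix (Fin K) (Fin K) ℝ) :
    Matrix (Fin K) (Fin K) ℝ :=
  1 - (2 * α) • D

/-- The limit `F_∞ = 4α²·Σ_{k=0}^∞ Sᵏ·DVD·Sᵏ` of the covariance recursion. -/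
noncomputable def Flim {K : ℕ} (α : ℝ) (D V : Matrix (Fin K) (Fin K) ℝ) :
    Matrix (Fin K) (Fin K) ℝ :=
  ∑' k : ℕ, (4 * α ^ 2) • (Smat α D ^ k * (D * V * D) * Smat α D ^ k)

section Recursion

theorem pow_succ_mul_mul_pow_succ {M : Type*} [Monoid M] (a b : M) (k : ℕ) :
    a ^ (k + 1) * b * a ^ (k + 1) = a * (a ^ k * b * a ^ k) * a := by
  rw [pow_succ a k, (Commute.pow_self a k).eq, mul_assoc a, mul_assoc a, ← (Commute.pow_self a k).eq]
  simp only [mul_assoc]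

variable {R : Type*} [NormedRing R] {S Q : R} {s : ℝ}

theorem norm_pow_mul_mul_pow_le (hs : ‖S‖ ≤ s) (A : R) (k : ℕ) :
    ‖S ^ k * A * S ^ k‖ ≤ ‖A‖ * (s ^ 2) ^ k := by
  induction k with
  | zero => simp
  | succ k ih =>
    have hs0 : 0 ≤ s := (norm_nonneg S).trans hs
    calc ‖S ^ (k + 1) * A * S ^ (k + 1)‖ = ‖S * (S ^ k * A * S ^ k) * S‖ := by
          rw [pow_succ_mul_mul_pow_succ]
      _ ≤ ‖S‖ * ‖S ^ k * A * S ^ k‖ * ‖S‖ :=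
          (norm_mul_le _ _).trans (by gcongr; exact norm_mul_le _ _)
      _ ≤ s * (‖A‖ * (s ^ 2) ^ k) * s := by gcongr
      _ = ‖A‖ * (s ^ 2) ^ (k + 1) := by ring

theorem summable_pow_mul_mul_pow [CompleteSpace R] (hs : ‖S‖ ≤ s) (hs1 : s < 1) :
    Summable fun k : ℕ ↦ S ^ k * Q * S ^ k := by
  have hs0 : 0 ≤ s := (norm_nonneg S).trans hs
  exact .of_norm_bounded
    ((summable_geometric_of_lt_one (sq_nonneg s) (by nlinarith)).mul_left ‖Q‖)
    (norm_pow_mul_mul_pow_le hs Q)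

theorem tsum_pow_mul_mul_pow_eq [CompleteSpace R] (hs : ‖S‖ ≤ s) (hs1 : s < 1) :
    ∑' k : ℕ, S ^ k * Q * S ^ k = S * (∑' k : ℕ, S ^ k * Q * S ^ k) * S + Q := by
  have h := summable_pow_mul_mul_pow (Q := Q) hs hs1
  rw [← h.tsum_mul_left, ← (h.mul_left S).tsum_mul_right, h.tsum_eq_zero_add, add_comm]
  congr 1
  · refine tsum_congr fun k ↦ ?_
    rw [pow_succ_mul_mul_pow_succ]
  · simp

theorem norm_tsum_pow_mul_mul_pow_le (hs : ‖S‖ ≤ s) (hs1 : s < 1) :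
    ‖∑' k : ℕ, S ^ k * Q * S ^ k‖ ≤ ‖Q‖ * (1 - s ^ 2)⁻¹ := by
  have hs0 : 0 ≤ s := (norm_nonneg S).trans hs
  exact tsum_of_norm_bounded
    ((hasSum_geometric_of_lt_one (sq_nonneg s) (by nlinarith)).mul_left ‖Q‖)
    (norm_pow_mul_mul_pow_le hs Q)

/-- Iterates of the affine map `X ↦ S * X * S + Q` with `‖S‖ < 1` converge to any fixed point. -/
theorem tendsto_of_mul_mul_add_recursion (hs : ‖S‖ ≤ s) (hs1 : s < 1) {L : R}
    (hL : L = S * L * S + Q) {F : ℕ → R} (hF : ∀ n, F (n + 1) = S * F n * S + Q) :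
    Tendsto F atTop (nhds L) := by
  have hs0 : 0 ≤ s := (norm_nonneg S).trans hs
  have hdiff (n : ℕ) : F n - L = S ^ n * (F 0 - L) * S ^ n := by
    induction n with
    | zero => simp
    | succ n ih =>
      calc F (n + 1) - L = S * (F n - L) * S := by
            rw [hF]; nth_rw 1 [hL]; noncomm_ring
        _ = S ^ (n + 1) * (F 0 - L) * S ^ (n + 1) := by
            rw [ih, pow_succ_mul_mul_pow_succ]
  rw [tendsto_iff_norm_sub_tendsto_zero]
  refine squeeze_zero (fun _ ↦ norm_nonneg _)
    (fun n ↦ (congrArg norm (hdiff n)).trans_le (norm_pow_mul_mul_pow_le hs _ n)) ?_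
  simpa using (tendsto_pow_atTop_nhds_zero_of_lt_one (sq_nonneg s) (by nlinarith)).const_mul
    ‖F 0 - L‖

end Recursion

section L2OpNorm

open scoped Matrix.Norms.L2Operator

/-- A symmetric matrix whose quadratic form is bounded by `c` has spectral norm at most `c`. -/
theorem Matrix.IsSymm.l2_opNorm_le {n : Type*} [Fintype n] [DecidableEq n]
    {A : Matrix n n ℝ} (hA : A.IsSymm) {c : ℝ} (hc : 0 ≤ c)
    (h : ∀ x : n → ℝ, |x ⬝ᵥ A *ᵥ x| ≤ c * ∑ i, x i ^ 2) : ‖A‖ ≤ c := by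
  have hsymm : (toEuclideanCLM (n := n) (𝕜 := ℝ) A).IsSymmetric := by
    rw [coe_toEuclideanCLM_eq_toEuclideanLin, isSymmetric_toEuclideanLin_iff, IsHermitian,
      conjTranspose_eq_transpose_of_trivial]
    exact hA
  rw [cstar_norm_def, ContinuousLinearMap.norm_eq_iSup_rayleighQuotient _ hsymm]
  refine ciSup_le fun x ↦ ?_
  rw [ContinuousLinearMap.rayleighQuotient, abs_div, abs_of_nonneg (sq_nonneg ‖x‖)]
  refine div_le_of_le_mul₀ (sq_nonneg _) hc ?_
  rw [ContinuousLinearMap.reApplyInnerSelf_apply, real_inner_comm, inner_toEuclideanCLM,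
    EuclideanSpace.real_norm_sq_eq]
  exact h x

end L2OpNorm

/-- For `D` symmetric positive definite with eigenvalues in `[λ_min, λ_max]`,
`V` symmetric positive semidefinite, and `0 < α < 1/(2λ_max)`, the recursion
`F_{n+1} = (I − 2αD)·F_n·(I − 2αD) + 4α²·DVD` converges from any symmetric `F₀` to
`F_∞ = 4α²·Σₖ (I−2αD)ᵏ·DVD·(I−2αD)ᵏ`, the unique symmetric fixed point, which is
independent of `F₀` and satisfies `‖F_∞‖ ≤ 2α·λ_max²·‖V‖/λ_min` in operator norm. -/
theorem stmt14 {K : ℕ} (hK : 1 ≤ K)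
    (D V : Matrix (Fin K) (Fin K) ℝ) (hD : D.IsSymm) (hV : V.IsSymm)
    (lmin lmax : ℝ) (hlmin : 0 < lmin)
    (hquadmin : ∀ x : Fin K → ℝ, lmin * ∑ i, x i ^ 2 ≤ x ⬝ᵥ D.mulVec x)
    (hquadmax : ∀ x : Fin K → ℝ, x ⬝ᵥ D.mulVec x ≤ lmax * ∑ i, x i ^ 2)
    (hVpsd : ∀ x : Fin K → ℝ, 0 ≤ x ⬝ᵥ V.mulVec x)
    (α : ℝ) (hα0 : 0 < α) (hα : α < 1 / (2 * lmax)) :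
    (∀ F₀ : Matrix (Fin K) (Fin K) ℝ, F₀.IsSymm →
      ∀ F : ℕ → Matrix (Fin K) (Fin K) ℝ, F 0 = F₀ →
        (∀ n, F (n + 1) = Smat α D * F n * Smat α D + (4 * α ^ 2) • (D * V * D)) →
        Tendsto F atTop (nhds (Flim α D V))) ∧
    Flim α D V = Smat α D * Flim α D V * Smat α D + (4 * α ^ 2) • (D * V * D) ∧
    (Flim α D V).IsSymm ∧
    (∀ G : Matrix (Fin K) (Fin K) ℝ, G.IsSymm →
      G = Smat α D * G * Smat α D + (4 * α ^ 2) • (D * V * D) → G = Flim α D V) ∧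
    matOpNorm (Flim α D V) ≤ 2 * α * lmax ^ 2 * matOpNorm V / lmin := by
  open scoped Matrix.Norms.L2Operator in
  have hle : lmin ≤ lmax := by
    have h := (hquadmin fun _ ↦ 1).trans (hquadmax fun _ ↦ 1)
    have hK' : (0 : ℝ) < K := by exact_mod_cast hK
    simp only [one_pow, Finset.sum_const, Finset.card_univ, Fintype.card_fin, nsmul_eq_mul,
      mul_one] at h
    exact le_of_mul_le_mul_right h hK'
  have hlmax : 0 < lmax := hlmin.trans_le hle
  have hαl : α * (2 * lmax) < 1 := (lt_div_iff₀ (by positivity)).1 hα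
  have hαl' : α * lmin ≤ α * lmax := by gcongr
  have hs1 : 1 - 2 * α * lmin < 1 := by linarith [mul_pos hα0 hlmin]
  have hDn : ‖D‖ ≤ lmax := by
    refine hD.l2_opNorm_le hlmax.le fun x ↦ ?_
    rw [abs_of_nonneg ((by positivity : 0 ≤ lmin * ∑ i, x i ^ 2).trans (hquadmin x))]
    exact hquadmax x
  have hSsymm : (Smat α D).IsSymm := by
    simp [Smat, Matrix.IsSymm, hD.eq]
  have hSn : ‖Smat α D‖ ≤ 1 - 2 * α * lmin := by
    refine hSsymm.l2_opNorm_le (by linarith) fun x ↦ ?_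
    have hx : x ⬝ᵥ Smat α D *ᵥ x = ∑ i, x i ^ 2 - 2 * α * (x ⬝ᵥ D *ᵥ x) := by
      rw [Smat, sub_mulVec, dotProduct_sub, smul_mulVec, one_mulVec, dotProduct_smul, smul_eq_mul]
      simp [dotProduct, sq]
    have hpos : 0 ≤ ∑ i, x i ^ 2 := by positivity
    have h1 := mul_le_mul_of_nonneg_left (hquadmin x) hα0.le
    have h2 := mul_le_mul_of_nonneg_left (hquadmax x) hα0.le
    have h3 := mul_le_mul_of_nonneg_right hαl.le hpos
    have h4 := mul_le_mul_of_nonneg_right hαl' hpos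
    rw [hx, abs_le]
    constructor <;> nlinarith
  set Q := (4 * α ^ 2) • (D * V * D) with hQ
  have hFlim : Flim α D V = ∑' k : ℕ, Smat α D ^ k * Q * Smat α D ^ k := by
    simp [Flim, hQ]
  have hfix : Flim α D V = Smat α D * Flim α D V * Smat α D + Q := by
    rw [hFlim]
    exact tsum_pow_mul_mul_pow_eq hSn hs1
  have hQn : ‖Q‖ ≤ 4 * α ^ 2 * (lmax * ‖V‖ * lmax) := by
    rw [hQ, norm_smul, Real.norm_of_nonneg (by positivity)]
    gcongr
    calc ‖D * V * D‖ ≤ ‖D‖ * ‖V‖ * ‖D‖ :=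
          (norm_mul_le _ _).trans (by gcongr; exact norm_mul_le _ _)
      _ ≤ lmax * ‖V‖ * lmax := by gcongr
  refine ⟨fun _ _ F _ hF ↦ tendsto_of_mul_mul_add_recursion hSn hs1 hfix hF, hfix, ?_,
    fun G _ hG ↦ tendsto_nhds_unique tendsto_const_nhds
      (tendsto_of_mul_mul_add_recursion (F := fun _ ↦ G) hSn hs1 hfix fun _ ↦ hG), ?_⟩
  · rw [hFlim, Matrix.IsSymm, transpose_tsum]
    refine tsum_congr fun k ↦ ?_
    simp [hQ, hD.eq, hV.eq, hSsymm.eq, mul_assoc]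
  · change ‖Flim α D V‖ ≤ 2 * α * lmax ^ 2 * ‖V‖ / lmin
    rw [hFlim]
    have hgap : 2 * α * lmin ≤ 1 - (1 - 2 * α * lmin) ^ 2 := by
      nlinarith [mul_pos hα0 hlmin]
    have hpos : 0 < 2 * α * lmin := by positivity
    calc _ ≤ ‖Q‖ * (1 - (1 - 2 * α * lmin) ^ 2)⁻¹ := norm_tsum_pow_mul_mul_pow_le hSn hs1
      _ ≤ 4 * α ^ 2 * (lmax * ‖V‖ * lmax) * (2 * α * lmin)⁻¹ := by
        gcongr
        exact inv_nonneg.2 (hpos.le.trans hgap)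
      _ = 2 * α * lmax ^ 2 * ‖V‖ / lmin := by field_simp; ring
end
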